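/- arXiv:1608.02875 — 6 statements merged into one kernel-verified Lean document; each statement's English description precedes it below -/
import Mathlib

section
/- Let A and B be real symmetric positive definite p×p matrices and 0 < ε < 1 such that (1−ε)B ⪯ A ⪯ (1+ε)B in the Loewner order. For b ∈ ℝᵖ let x* = A⁻¹b and x¹ = B⁻¹b. Then ‖x¹ − x*‖_A ≤ ε‖x*‖_A. -/
/-!
Suppose `B` is positive definite and put `N = B⁻¹ A - 1`, which is self-adjoint for the form `B`.
The hypotheses say that its spectrum lies in `[-ε, ε]`, the error is `x¹ - x* = N x*`, and the
claim is that `(1 + N) (ε² - N²)` is nonnegative. Weighting the nonnegative linear factors by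
squares avoids both the spectral theorem and any inverse: for `ε ≤ 1`,
`2ε (1 + N) (ε² - N²) = (1 + ε) (ε - N) (ε + N)² + (1 - ε) (ε + N) (ε - N)²`,
while for `1 ≤ ε` the nonnegativity of `1 + N` takes over from that of `ε + N`:
`(1 + ε) (1 + N) (ε² - N²) = 2ε (ε - N) (1 + N)² + (ε - 1) (1 + N) (ε - N)²`.
Read as quadratic forms at `x*`, these identities only use `A x* = B x¹`.
-/

open Matrix

/-- The `A`-norm `‖y‖_A = √(yᵀ A y)` for a positive definite matrix `A`. -/
noncomputable def anorm {p : ℕ} (A : Matrix (Fin p) (Fin p) ℝ) (y : Fin p → ℝ) : ℝ :=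
  Real.sqrt (y ⬝ᵥ (A *ᵥ y))

section BilinForm

variable {R M : Type*} [CommRing R] [LinearOrder R] [IsStrictOrderedRing R]
  [AddCommGroup M] [Module R M] {α β : LinearMap.BilinForm R M} {ε : R} {x z : M}

theorem bilinForm_sub_self_le_sq_mul_of_le_one (hα : α.IsSymm) (hβ : β.IsSymm)
    (hε0 : 0 < ε) (hε1 : ε ≤ 1)
    (hlow : ∀ v, (1 - ε) * β v v ≤ α v v) (hhigh : ∀ v, α v v ≤ (1 + ε) * β v v)
    (hxz : ∀ v, α v x = β v z) :
    α (z - x) (z - x) ≤ ε ^ 2 * α x x := by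
  set u := z - x + ε • x with hu
  set w := ε • x - (z - x) with hw
  have certificate : 2 * ε * (ε ^ 2 * α x x - α (z - x) (z - x)) =
      (1 + ε) * ((1 + ε) * β u u - α u u) + (1 - ε) * (α w w - (1 - ε) * β w w) := by
    simp only [hu, hw, map_add, map_sub, map_smul, LinearMap.add_apply, LinearMap.sub_apply,
      LinearMap.smul_apply, smul_eq_mul, ← hxz, hα.eq x z, hβ.eq z x]
    ring
  have certificate_nonneg : 0 ≤ 2 * ε * (ε ^ 2 * α x x - α (z - x) (z - x)) := by
    rw [certificate]
    exact add_nonneg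
      (mul_nonneg (by linarith) (sub_nonneg.2 (hhigh u)))
      (mul_nonneg (sub_nonneg.2 hε1) (sub_nonneg.2 (hlow w)))
  exact sub_nonneg.1 (nonneg_of_mul_nonneg_right certificate_nonneg (by positivity))

theorem bilinForm_sub_self_le_sq_mul_of_one_le (hα : α.IsPosSemidef) (hε : 1 ≤ ε)
    (hhigh : ∀ v, α v v ≤ (1 + ε) * β v v) (hxz : ∀ v, α v x = β v z) :
    α (z - x) (z - x) ≤ ε ^ 2 * α x x := by
  set w := ε • x - (z - x) with hw
  have certificate : (1 + ε) * (ε ^ 2 * α x x - α (z - x) (z - x)) =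
      2 * ε * ((1 + ε) * β z z - α z z) + (ε - 1) * α w w := by
    simp only [hw, map_sub, map_smul, LinearMap.sub_apply, LinearMap.smul_apply, smul_eq_mul,
      ← hxz, hα.isSymm.eq x z]
    ring
  have certificate_nonneg : 0 ≤ (1 + ε) * (ε ^ 2 * α x x - α (z - x) (z - x)) := by
    rw [certificate]
    exact add_nonneg
      (mul_nonneg (by linarith) (sub_nonneg.2 (hhigh z)))
      (mul_nonneg (sub_nonneg.2 hε) (hα.nonneg w))
  exact sub_nonneg.1 (nonneg_of_mul_nonneg_right certificate_nonneg (by linarith))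

theorem bilinForm_sub_self_le_sq_mul (hα : α.IsPosSemidef) (hβ : β.IsSymm) (hε : 0 < ε)
    (hlow : ∀ v, (1 - ε) * β v v ≤ α v v) (hhigh : ∀ v, α v v ≤ (1 + ε) * β v v)
    (hxz : ∀ v, α v x = β v z) :
    α (z - x) (z - x) ≤ ε ^ 2 * α x x := by
  rcases le_total ε 1 with hε1 | hε1
  · exact bilinForm_sub_self_le_sq_mul_of_le_one hα.isSymm hβ hε hε1 hlow hhigh hxz
  · exact bilinForm_sub_self_le_sq_mul_of_one_le hα hε1 hhigh hxz

end BilinForm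

section ToBilin

variable {n R : Type*} [Fintype n] [DecidableEq n] [CommRing R] [PartialOrder R] [StarRing R]
  [TrivialStar R] {A B : Matrix n n R}

theorem isPosSemidef_toBilin' (hA : A.PosSemidef) : A.toBilin'.IsPosSemidef where
  eq := (isSymm_toBilin'_iff_isSymm.2 (by simpa using hA.isHermitian)).eq
  nonneg v := by simpa [toBilin'_apply'] using hA.dotProduct_mulVec_nonneg v

theorem toBilin'_apply_self_le [AddRightMono R] (hAB : (B - A).PosSemidef) (v : n → R) :
    A.toBilin' v v ≤ B.toBilin' v v := by
  simpa using (isPosSemidef_toBilin' hAB).nonneg v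

end ToBilin

theorem mulVec_nonsing_inv_mulVec {n R : Type*} [Fintype n] [DecidableEq n] [CommRing R]
    {A : Matrix n n R} (hA : IsUnit A) (b : n → R) : A *ᵥ (A⁻¹ *ᵥ b) = b := by
  rw [mulVec_mulVec, mul_nonsing_inv _ ((isUnit_iff_isUnit_det A).1 hA), one_mulVec]

theorem anorm_le_mul_anorm {p : ℕ} {A : Matrix (Fin p) (Fin p) ℝ} {c : ℝ} {x y : Fin p → ℝ}
    (hc : 0 ≤ c) (h : y ⬝ᵥ (A *ᵥ y) ≤ c ^ 2 * (x ⬝ᵥ (A *ᵥ x))) :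
    anorm A y ≤ c * anorm A x :=
  calc anorm A y ≤ √(c ^ 2 * (x ⬝ᵥ (A *ᵥ x))) := Real.sqrt_le_sqrt h
    _ = c * anorm A x := by rw [Real.sqrt_mul (sq_nonneg c), Real.sqrt_sq hc, anorm]

theorem one_step_refinement_bound_general {p : ℕ} (A B : Matrix (Fin p) (Fin p) ℝ) (ε : ℝ)
    (hA : A.PosSemidef) (hε : 0 < ε)
    (hlow : (A - (1 - ε) • B).PosSemidef) (hhigh : ((1 + ε) • B - A).PosSemidef)
    (b x z : Fin p → ℝ) (hx : A *ᵥ x = b) (hz : B *ᵥ z = b) :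
    anorm A (z - x) ≤ ε * anorm A x := by
  have hB : B.IsSymm := by
    have hsum : ((1 + ε) • B).IsHermitian := by
      simpa only [sub_add_cancel] using hhigh.isHermitian.add hA.isHermitian
    have hBH : B.IsHermitian := by
      simpa [IsHermitian, (by positivity : 1 + ε ≠ 0)] using hsum
    simpa using hBH
  have hlow' (v) : (1 - ε) * B.toBilin' v v ≤ A.toBilin' v v := by
    simpa using toBilin'_apply_self_le hlow v
  have hhigh' (v) : A.toBilin' v v ≤ (1 + ε) * B.toBilin' v v := by
    simpa using toBilin'_apply_self_le hhigh v
  have hxz (v) : A.toBilin' v x = B.toBilin' v z := by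
    simp only [toBilin'_apply', hx, hz]
  have key := bilinForm_sub_self_le_sq_mul (isPosSemidef_toBilin' hA)
    (isSymm_toBilin'_iff_isSymm.2 hB) hε hlow' hhigh' hxz
  exact anorm_le_mul_anorm hε.le (by simpa only [toBilin'_apply'] using key)

/-- if `(1-ε)B ⪯ A ⪯ (1+ε)B` (Loewner order) with `A, B` symmetric positive
definite and `0 < ε < 1`, then `x¹ = B⁻¹ b` approximates `x* = A⁻¹ b` with
`‖x¹ - x*‖_A ≤ ε ‖x*‖_A`. -/
theorem one_step_refinement_bound {p : ℕ} (A B : Matrix (Fin p) (Fin p) ℝ) (ε : ℝ)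
    (hA : A.PosDef) (hB : B.PosDef) (hε0 : 0 < ε) (hε1 : ε < 1)
    (hlow : (A - (1 - ε) • B).PosSemidef) (hhigh : ((1 + ε) • B - A).PosSemidef)
    (b : Fin p → ℝ) :
    anorm A (B⁻¹ *ᵥ b - A⁻¹ *ᵥ b) ≤ ε * anorm A (A⁻¹ *ᵥ b) :=
  one_step_refinement_bound_general A B ε hA.posSemidef hε0 hlow hhigh b _ _
    (mulVec_nonsing_inv_mulVec hA.isUnit b) (mulVec_nonsing_inv_mulVec hB.isUnit b)
end

section
/- Let A be a real p×p matrix, H an invertible real p×p matrix, g ∈ ℝᵖ, ε₀ ≥ 0, and suppose p̂ ∈ ℝᵖ satisfies ‖Hp̂ − g‖ ≤ ε₀‖g‖. Let ε₁ = ‖(A − H)H⁻¹‖. Then ‖Ap̂ − g‖ ≤ (ε₀ + (1+ε₀)ε₁)‖g‖. -/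
open Matrix

/-- Spectral norm: operator norm induced by the Euclidean vector norm. -/
noncomputable def specNorm {p : ℕ} (M : Matrix (Fin p) (Fin p) ℝ) : ℝ :=
  ‖Matrix.toEuclideanCLM (𝕜 := ℝ) M‖

section RelativeError

variable {E : Type*} [SeminormedAddCommGroup E] {x y z : E} {δ ε : ℝ}

theorem norm_le_one_add_mul_of_norm_sub_le (hyx : ‖y - x‖ ≤ δ * ‖x‖) :
    ‖y‖ ≤ (1 + δ) * ‖x‖ := by
  linarith [norm_le_norm_add_norm_sub' y x]

theorem norm_sub_le_of_relative_errors (hε : 0 ≤ ε) (hyx : ‖y - x‖ ≤ δ * ‖x‖)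
    (hzy : ‖z - y‖ ≤ ε * ‖y‖) : ‖z - x‖ ≤ (δ + (1 + δ) * ε) * ‖x‖ :=
  calc
    ‖z - x‖ ≤ ‖z - y‖ + ‖y - x‖ := norm_sub_le_norm_sub_add_norm_sub z y x
    _ ≤ ε * ‖y‖ + δ * ‖x‖ := add_le_add hzy hyx
    _ ≤ ε * ((1 + δ) * ‖x‖) + δ * ‖x‖ := by
      gcongr
      exact norm_le_one_add_mul_of_norm_sub_le hyx
    _ = (δ + (1 + δ) * ε) * ‖x‖ := by ring

end RelativeError

section LeftInverse

variable {𝕜 E F : Type*} [NontriviallyNormedField 𝕜]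
  [AddCommGroup E] [Module 𝕜 E] [TopologicalSpace E]
  [SeminormedAddCommGroup F] [NormedSpace 𝕜 F]

theorem norm_apply_sub_apply_le_of_leftInverse (A : E →L[𝕜] F) {H : E →L[𝕜] F}
    {B : F →L[𝕜] E} (hBH : Function.LeftInverse B H) (x : E) :
    ‖A x - H x‖ ≤ ‖(A - H) ∘L B‖ * ‖H x‖ := by
  simpa only [ContinuousLinearMap.comp_apply, _root_.sub_apply, hBH x]
    using ((A - H) ∘L B).le_opNorm (H x)

theorem inexact_solve_residual_bound_general (A : E →L[𝕜] F) {H : E →L[𝕜] F}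
    {B : F →L[𝕜] E} (hBH : Function.LeftInverse B H) {g : F} {x : E} {ε₀ : ℝ}
    (hres : ‖H x - g‖ ≤ ε₀ * ‖g‖) :
    ‖A x - g‖ ≤ (ε₀ + (1 + ε₀) * ‖(A - H) ∘L B‖) * ‖g‖ :=
  norm_sub_le_of_relative_errors (norm_nonneg _) hres
    (norm_apply_sub_apply_le_of_leftInverse A hBH x)

end LeftInverse

theorem leftInverse_toEuclideanCLM_inv {𝕜 n : Type*} [RCLike 𝕜] [Fintype n] [DecidableEq n]
    {H : Matrix n n 𝕜} (hH : IsUnit H.det) :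
    Function.LeftInverse (toEuclideanCLM (𝕜 := 𝕜) H⁻¹) (toEuclideanCLM (𝕜 := 𝕜) H) := by
  intro x
  rw [← mul_apply_eq_comp, ← map_mul, nonsing_inv_mul H hH, map_one, one_apply_eq_self]

/-- if `p̂` solves `H p = g` approximately, `‖H p̂ - g‖ ≤ ε₀ ‖g‖`, and
`ε₁ = ‖(A - H) H⁻¹‖`, then `‖A p̂ - g‖ ≤ (ε₀ + (1 + ε₀) ε₁) ‖g‖`. -/
theorem inexact_solve_residual_bound {p : ℕ}
    (A H : Matrix (Fin p) (Fin p) ℝ) (hH : IsUnit H.det)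
    (g phat : EuclideanSpace ℝ (Fin p)) (ε₀ : ℝ) (hε₀ : 0 ≤ ε₀)
    (hres : ‖Matrix.toEuclideanCLM (𝕜 := ℝ) H phat - g‖ ≤ ε₀ * ‖g‖) :
    ‖Matrix.toEuclideanCLM (𝕜 := ℝ) A phat - g‖ ≤
      (ε₀ + (1 + ε₀) * specNorm ((A - H) * H⁻¹)) * ‖g‖ := by
  rw [specNorm, map_mul, map_sub]
  exact inexact_solve_residual_bound_general _ (leftInverse_toEuclideanCLM_inv hH) hres
end

section
/- Let A be a real p×p matrix, H an invertible real p×p matrix, G ∈ ℝᵖ with G ≠ 0, ε₀ ≥ 0, and g ∈ ℝᵖ with ‖g − G‖ ≤ ε₀‖G‖. Set p̂ = H⁻¹g and ε₁ = ‖(A − H)H⁻¹‖. Then ‖Ap̂ − G‖ ≤ (ε₀‖AH⁻¹‖ + ε₁)‖G‖. -/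
open Matrix

theorem norm_apply_sub_apply_le {𝕜 𝕜₂ E F : Type*}
    [NontriviallyNormedField 𝕜] [NontriviallyNormedField 𝕜₂] {σ : 𝕜 →+* 𝕜₂} [RingHomIsometric σ]
    [SeminormedAddCommGroup E] [NormedSpace 𝕜 E] [SeminormedAddCommGroup F] [NormedSpace 𝕜₂ F]
    (S T : E →SL[σ] F) (x y : E) :
    ‖S x - T y‖ ≤ ‖S‖ * ‖x - y‖ + ‖S - T‖ * ‖y‖ :=
  calc
    ‖S x - T y‖ = ‖S (x - y) + (S - T) y‖ := by
      rw [map_sub, _root_.sub_apply, sub_add_sub_cancel]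
    _ ≤ ‖S‖ * ‖x - y‖ + ‖S - T‖ * ‖y‖ :=
      norm_add_le_of_le (S.le_opNorm _) ((S - T).le_opNorm _)

theorem subsampled_gradient_residual_bound_general {𝕜 E F : Type*} [NontriviallyNormedField 𝕜]
    [AddCommGroup E] [Module 𝕜 E] [TopologicalSpace E] [SeminormedAddCommGroup F] [NormedSpace 𝕜 F]
    (A H : E →L[𝕜] F) (K : F →L[𝕜] E) (hHK : H ∘L K = .id 𝕜 F)
    (G g : F) (ε₀ : ℝ) (hg : ‖g - G‖ ≤ ε₀ * ‖G‖) :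
    ‖A (K g) - G‖ ≤ (ε₀ * ‖A ∘L K‖ + ‖(A - H) ∘L K‖) * ‖G‖ :=
  calc
    ‖A (K g) - G‖ ≤ ‖A ∘L K‖ * ‖g - G‖ + ‖A ∘L K - .id 𝕜 F‖ * ‖G‖ :=
      norm_apply_sub_apply_le (A ∘L K) (.id 𝕜 F) g G
    _ = ‖A ∘L K‖ * ‖g - G‖ + ‖(A - H) ∘L K‖ * ‖G‖ := by
      rw [ContinuousLinearMap.sub_comp, hHK]
    _ ≤ ‖A ∘L K‖ * (ε₀ * ‖G‖) + ‖(A - H) ∘L K‖ * ‖G‖ := by gcongr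
    _ = (ε₀ * ‖A ∘L K‖ + ‖(A - H) ∘L K‖) * ‖G‖ := by ring

theorem toEuclideanCLM_comp_inv {𝕜 n : Type*} [RCLike 𝕜] [Fintype n] [DecidableEq n]
    {H : Matrix n n 𝕜} (hH : IsUnit H.det) :
    toEuclideanCLM (𝕜 := 𝕜) H ∘L toEuclideanCLM (𝕜 := 𝕜) H⁻¹ = .id 𝕜 (EuclideanSpace 𝕜 n) := by
  rw [← ContinuousLinearMap.mul_def, ← map_mul, mul_nonsing_inv H hH, map_one,
    ContinuousLinearMap.one_def]

/-- if `g` approximates the true gradient `G ≠ 0` with `‖g - G‖ ≤ ε₀ ‖G‖`,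
`p̂ = H⁻¹ g` and `ε₁ = ‖(A - H) H⁻¹‖`, then `‖A p̂ - G‖ ≤ (ε₀ ‖A H⁻¹‖ + ε₁) ‖G‖`. -/
theorem subsampled_gradient_residual_bound {p : ℕ}
    (A H : Matrix (Fin p) (Fin p) ℝ) (hH : IsUnit H.det)
    (G g phat : EuclideanSpace ℝ (Fin p)) (hG : G ≠ 0)
    (ε₀ : ℝ) (hε₀ : 0 ≤ ε₀)
    (hg : ‖g - G‖ ≤ ε₀ * ‖G‖)
    (hphat : phat = Matrix.toEuclideanCLM (𝕜 := ℝ) H⁻¹ g) :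
    ‖Matrix.toEuclideanCLM (𝕜 := ℝ) A phat - G‖ ≤
      (ε₀ * specNorm (A * H⁻¹) + specNorm ((A - H) * H⁻¹)) * ‖G‖ := by
  simpa only [specNorm, hphat, map_mul, map_sub, ContinuousLinearMap.mul_def] using
    subsampled_gradient_residual_bound_general _ _ _ (toEuclideanCLM_comp_inv hH) G g ε₀ hg
end

section
/- Let H_S be a real symmetric positive definite p×p matrix with orthonormal eigenvectors u₁,…,u_p and eigenvalues λ₁ ≥ λ₂ ≥ … ≥ λ_p > 0, let 1 ≤ r < p, let 0 < η ≤ 1, and define the NewSamp regularized matrix H = (1/η)( Σ_{i=1}^{r} (λ_i − λ_{r+1}) u_i u_iᵀ + λ_{r+1} I ). Then H is positive definite, ‖H⁻¹‖ = η/λ_{r+1}, and ‖I − H_S H⁻¹‖ = 1 − η λ_p/λ_{r+1}. -/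
open Matrix

/-!
All matrices involved are diagonal in the eigenbasis `u`: by orthonormality, conjugating real
diagonal matrices by the unitary matrix with columns `u i` is an isometric algebra homomorphism
from vectors (with the sup norm) to matrices (with the spectral norm). The identities thus become
statements about the eigenvalues `max λᵢ λ_{r+1} / η` of `H`. The smallest of them is
`λ_{r+1} / η`, and since `t / max t c = min 1 (t / c)`, the eigenvalues of `1 - H_S H⁻¹` are the
numbers `1 - η * min 1 (λᵢ / λ_{r+1})`, which are nonnegative and largest at the last index.
-/

namespace NewSamp

open scoped Matrix.Norms.L2Operator ComplexOrder

theorem pi_norm_eq_apply_of_forall_le {ι : Type*} [Fintype ι] {v : ι → ℝ} (hv : ∀ i, 0 ≤ v i)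
    {k : ι} (hk : ∀ i, v i ≤ v k) : ‖v‖ = v k := by
  apply le_antisymm
  · exact (pi_norm_le_iff_of_nonneg (hv k)).2 fun i ↦ by
      simpa only [Real.norm_of_nonneg (hv i)] using hk i
  · exact (Real.le_norm_self _).trans (norm_le_pi_norm v k)

theorem div_max_eq_min_one_div {K : Type*} [Semifield K] [LinearOrder K] [IsStrictOrderedRing K]
    {c : K} (hc : 0 < c) (t : K) : t / max t c = min 1 (t / c) := by
  rcases le_total t c with h | h
  · rw [max_eq_right h, min_eq_right ((div_le_one hc).2 h)]
  · rw [max_eq_left h, min_eq_left ((one_le_div hc).2 h), div_self (hc.trans_le h).ne']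

section Eigenvalues

variable {ι : Type*} {lam : ι → ℝ} {c η : ℝ}

/-- The eigenvalues of the NewSamp matrix: the eigenvalues `lam` of the sub-sampled Hessian,
raised to `c` where they are smaller, and divided by the step size `η`. In the NewSamp matrix of
rank `r`, the threshold `c` is `λ_{r+1}`. -/
noncomputable def flattenedEigenvalues (lam : ι → ℝ) (c η : ℝ) : ι → ℝ :=
  fun i ↦ max (lam i) c / η

theorem flattenedEigenvalues_pos (hc : 0 < c) (hη : 0 < η) (i : ι) :
    0 < flattenedEigenvalues lam c η i :=
  div_pos (lt_max_of_lt_right hc) hη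

theorem inv_flattenedEigenvalues_apply (i : ι) :
    (flattenedEigenvalues lam c η)⁻¹ i = η / max (lam i) c :=
  inv_div _ _

theorem one_sub_mul_inv_flattenedEigenvalues_apply (hc : 0 < c) (i : ι) :
    (1 - lam * (flattenedEigenvalues lam c η)⁻¹) i = 1 - η * min 1 (lam i / c) := by
  rw [Pi.sub_apply, Pi.one_apply, Pi.mul_apply, inv_flattenedEigenvalues_apply,
    mul_div_left_comm, div_max_eq_min_one_div hc]

variable [Fintype ι]

theorem norm_inv_flattenedEigenvalues (hc : 0 < c) (hη : 0 ≤ η) {k : ι} (hk : lam k ≤ c) :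
    ‖(flattenedEigenvalues lam c η)⁻¹‖ = η / c := by
  have hmax_pos (i : ι) : 0 < max (lam i) c := lt_max_of_lt_right hc
  rw [pi_norm_eq_apply_of_forall_le (k := k), inv_flattenedEigenvalues_apply, max_eq_right hk]
  · intro i
    rw [inv_flattenedEigenvalues_apply]
    exact div_nonneg hη (hmax_pos i).le
  · intro i
    rw [inv_flattenedEigenvalues_apply, inv_flattenedEigenvalues_apply, max_eq_right hk]
    gcongr
    exact le_max_right _ _

theorem norm_one_sub_mul_inv_flattenedEigenvalues (hc : 0 < c) (hη₀ : 0 ≤ η) (hη₁ : η ≤ 1)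
    {k : ι} (hk : lam k ≤ c) (hmin : ∀ i, lam k ≤ lam i) :
    ‖1 - lam * (flattenedEigenvalues lam c η)⁻¹‖ = 1 - η * lam k / c := by
  rw [pi_norm_eq_apply_of_forall_le (k := k), one_sub_mul_inv_flattenedEigenvalues_apply hc,
    min_eq_right ((div_le_one hc).2 hk), mul_div_assoc]
  · intro i
    rw [one_sub_mul_inv_flattenedEigenvalues_apply hc, sub_nonneg]
    calc η * min 1 (lam i / c) ≤ η * 1 := by gcongr; exact min_le_left _ _
      _ ≤ 1 := by rwa [mul_one]
  · intro i
    simp only [one_sub_mul_inv_flattenedEigenvalues_apply hc]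
    gcongr
    exact hmin i

end Eigenvalues

section ConjDiagonal

variable {𝕜 ι : Type*} [RCLike 𝕜] [Fintype ι] [DecidableEq ι]

theorem exists_unitaryGroup_col_eq {u : ι → ι → 𝕜}
    (hu : ∀ i j, star (u i) ⬝ᵥ u j = if i = j then 1 else 0) :
    ∃ U : unitaryGroup ι 𝕜, (U : Matrix ι ι 𝕜).col = u := by
  refine ⟨⟨(of u)ᵀ, mem_unitaryGroup_iff'.2 ?_⟩, rfl⟩
  ext i j
  rw [one_apply, ← hu i j]
  rfl

/-- The real diagonal matrices in the orthonormal basis of columns of a unitary matrix `U`, as an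
algebra homomorphism `d ↦ U * diagonal d * star U`. -/
noncomputable def conjDiagonal (U : unitaryGroup ι 𝕜) : (ι → ℝ) →ₐ[ℝ] Matrix ι ι 𝕜 :=
  (Unitary.conjStarAlgAut ℝ (Matrix ι ι 𝕜) U : Matrix ι ι 𝕜 →ₐ[ℝ] Matrix ι ι 𝕜).comp <|
    (diagonalAlgHom ℝ).comp (RCLike.ofRealAm.compLeft ι)

variable (U : unitaryGroup ι 𝕜)

theorem conjDiagonal_apply (d : ι → ℝ) :
    conjDiagonal U d = U * diagonal (fun i ↦ (d i : 𝕜)) * star (U : Matrix ι ι 𝕜) :=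
  rfl

theorem conjDiagonal_eq_sum (d : ι → ℝ) :
    conjDiagonal U d = ∑ i, d i • vecMulVec ((U : Matrix ι ι 𝕜).col i)
      (star ((U : Matrix ι ι 𝕜).col i)) := by
  ext a b
  rw [conjDiagonal_apply, mul_apply, Matrix.sum_apply]
  refine Finset.sum_congr rfl fun i _ ↦ ?_
  rw [mul_diagonal, Matrix.smul_apply, vecMulVec_apply, RCLike.real_smul_eq_coe_mul,
    mul_comm (U a i), mul_assoc]
  rfl

theorem eq_conjDiagonal_of_mulVec_col {M : Matrix ι ι 𝕜} {d : ι → ℝ}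
    (hM : ∀ i, M *ᵥ (U : Matrix ι ι 𝕜).col i = d i • (U : Matrix ι ι 𝕜).col i) :
    M = conjDiagonal U d := by
  have hMU : M * U = U * diagonal (fun i ↦ (d i : 𝕜)) := by
    ext a i
    rw [mul_diagonal, mul_comm, ← RCLike.real_smul_eq_coe_mul]
    exact congrFun (hM i) a
  rw [conjDiagonal_apply, ← hMU, mul_assoc, Unitary.mul_star_self_of_mem U.2, mul_one]

theorem norm_conjDiagonal (d : ι → ℝ) : ‖conjDiagonal U d‖ = ‖d‖ := by
  rw [conjDiagonal_apply, CStarRing.norm_mul_mem_unitary _ (Unitary.star_mem U.2),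
    CStarRing.norm_mem_unitary_mul _ U.2, l2_opNorm_diagonal]
  simp [Pi.norm_def]

variable {d : ι → ℝ}

theorem posDef_conjDiagonal (hd : ∀ i, 0 < d i) : (conjDiagonal U d).PosDef :=
  (Unitary.isUnit_coe (U := U)).posDef_star_right_conjugate_iff.2 <|
    PosDef.diagonal fun i ↦ RCLike.ofReal_pos.2 (hd i)

theorem inv_conjDiagonal (hd : ∀ i, d i ≠ 0) : (conjDiagonal U d)⁻¹ = conjDiagonal U d⁻¹ := by
  have hd_mul : d * d⁻¹ = 1 := funext fun i ↦ mul_inv_cancel₀ (hd i)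
  exact inv_eq_right_inv (by rw [← map_mul, hd_mul, map_one])

end ConjDiagonal

section Hessian

variable {𝕜 ι : Type*} [RCLike 𝕜] [Fintype ι] [LinearOrder ι]

/-- The NewSamp regularization `η⁻¹ (∑_{i < R} (λᵢ - λ_R) uᵢ uᵢᴴ + λ_R I)` of a Hermitian matrix
with eigenvectors `u` and eigenvalues `lam`. The rank is encoded by the first discarded index `R`,
so that `λ_R` is `λ_{r+1}` in the paper's notation. -/
noncomputable def regularizedHessian (u : ι → ι → 𝕜) (lam : ι → ℝ) (R : ι) (η : ℝ) :
    Matrix ι ι 𝕜 :=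
  (1 / η) • (∑ i with i < R, (lam i - lam R) • vecMulVec (u i) (star (u i)) +
    lam R • (1 : Matrix ι ι 𝕜))

theorem regularizedHessian_col_eq_conjDiagonal (U : unitaryGroup ι 𝕜) {lam : ι → ℝ}
    (hlam : Antitone lam) (R : ι) (η : ℝ) :
    regularizedHessian (U : Matrix ι ι 𝕜).col lam R η =
      conjDiagonal U (flattenedEigenvalues lam (lam R) η) := by
  have hsum : ∑ i with i < R, (lam i - lam R) • vecMulVec ((U : Matrix ι ι 𝕜).col i)
      (star ((U : Matrix ι ι 𝕜).col i)) =
        conjDiagonal U fun i ↦ if i < R then lam i - lam R else 0 := by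
    simp only [conjDiagonal_eq_sum, ite_smul, zero_smul, Finset.sum_filter]
  rw [regularizedHessian, hsum, ← map_one (conjDiagonal U), ← map_smul, ← map_add, ← map_smul]
  congr 1
  ext i
  rcases lt_or_ge i R with hi | hi
  · simp [flattenedEigenvalues, hi, hlam hi.le, div_eq_inv_mul]
  · simp [flattenedEigenvalues, hi.not_gt, hlam hi, div_eq_inv_mul]

end Hessian

end NewSamp

open NewSamp in
open scoped Matrix.Norms.L2Operator ComplexOrder in
theorem newsamp_spectral_identities_general {𝕜 ι : Type*} [RCLike 𝕜] [Fintype ι]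
    [LinearOrder ι] {HS : Matrix ι ι 𝕜} {u : ι → ι → 𝕜} {lam : ι → ℝ}
    (hu : ∀ i j, star (u i) ⬝ᵥ u j = if i = j then 1 else 0)
    (heig : ∀ i, HS *ᵥ u i = lam i • u i) (hlam : Antitone lam) {R k : ι} (hR : 0 < lam R)
    (hk : IsTop k) {η : ℝ} (hη₀ : 0 < η) (hη₁ : η ≤ 1) :
    (regularizedHessian u lam R η).PosDef ∧
      ‖(regularizedHessian u lam R η)⁻¹‖ = η / lam R ∧
      ‖1 - HS * (regularizedHessian u lam R η)⁻¹‖ = 1 - η * lam k / lam R := by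
  obtain ⟨U, rfl⟩ := exists_unitaryGroup_col_eq hu
  have hpos := flattenedEigenvalues_pos (lam := lam) hR hη₀
  rw [regularizedHessian_col_eq_conjDiagonal U hlam, inv_conjDiagonal U fun i ↦ (hpos i).ne',
    eq_conjDiagonal_of_mulVec_col U heig, ← map_mul, ← map_one (conjDiagonal U), ← map_sub,
    norm_conjDiagonal, norm_conjDiagonal]
  exact ⟨posDef_conjDiagonal U hpos, norm_inv_flattenedEigenvalues hR hη₀.le le_rfl,
    norm_one_sub_mul_inv_flattenedEigenvalues hR hη₀.le hη₁ (hlam (hk R)) fun i ↦ hlam (hk i)⟩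

/-- spectral identities for the NewSamp regularized matrix
`H = (1/η)(Σ_{i<r} (λᵢ - λᵣ) uᵢuᵢᵀ + λᵣ I)` (with `0`-based indexing, so `λ ⟨r⟩` is the
`(r+1)`-st eigenvalue), built from a symmetric positive definite `H_S` with orthonormal
eigenvectors `u i` and nonincreasing eigenvalues `λ`: `H` is positive definite,
`‖H⁻¹‖ = η/λ_{r+1}` and `‖I - H_S H⁻¹‖ = 1 - η λ_p / λ_{r+1}`. -/
theorem newsamp_spectral_identities {p : ℕ}
    (HS : Matrix (Fin p) (Fin p) ℝ) (hsymm : HS.IsHermitian) (hpd : HS.PosDef)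
    (u : Fin p → (Fin p → ℝ)) (lam : Fin p → ℝ)
    (horth : ∀ i j, u i ⬝ᵥ u j = if i = j then (1 : ℝ) else 0)
    (heig : ∀ i, HS *ᵥ u i = lam i • u i)
    (hdec : ∀ i j : Fin p, i ≤ j → lam j ≤ lam i)
    (hplast : 0 < p) (hpos : 0 < lam ⟨p - 1, by omega⟩)
    (r : ℕ) (hr1 : 1 ≤ r) (hrp : r < p)
    (η : ℝ) (hη0 : 0 < η) (hη1 : η ≤ 1)
    (H : Matrix (Fin p) (Fin p) ℝ)
    (hHdef : H = (1 / η) •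
      ((∑ i : Fin p, if (i : ℕ) < r
          then (lam i - lam ⟨r, hrp⟩) • Matrix.vecMulVec (u i) (u i)
          else 0) + lam ⟨r, hrp⟩ • (1 : Matrix (Fin p) (Fin p) ℝ))) :
    H.PosDef ∧ specNorm H⁻¹ = η / lam ⟨r, hrp⟩ ∧
      specNorm ((1 : Matrix (Fin p) (Fin p) ℝ) - HS * H⁻¹) =
        1 - η * lam ⟨p - 1, by omega⟩ / lam ⟨r, hrp⟩ := by
  rw [hHdef, ← Finset.sum_filter]
  exact newsamp_spectral_identities_general horth heig (fun i j ↦ hdec i j)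
    (hpos.trans_le (hdec _ _ (Nat.le_sub_one_of_lt hrp))) (fun i ↦ Nat.le_sub_one_of_lt i.2) hη0 hη1
end

section
/- Let F : ℝᵖ → ℝ be twice continuously differentiable, and let x* ∈ ℝᵖ satisfy ∇F(x*) = 0 with ∇²F(x*) positive definite. Let 0 ≤ γ < 1 and let (x^t) be a sequence satisfying x^{t+1} = x^t − v^t where ‖∇²F(x^t)v^t − ∇F(x^t)‖ ≤ γ‖∇F(x^t)‖ for all t. Then for every γ' with γ < γ' < 1 there exists δ > 0 such that whenever ‖x⁰ − x*‖ ≤ δ, the sequence (x^t) converges to x* and ‖∇²F(x*)(x^{t+1} − x*)‖ ≤ γ'‖∇²F(x*)(x^t − x*)‖ for all t ≥ 0. -/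
open RealInnerProductSpace Filter

/-!
Write `H` for the Hessian at `x*`, `e` and `e⁺` for the errors of two consecutive iterates. Up to
terms of size `o(‖e‖ + ‖e⁺‖)`, the gradient at the iterate is `H e` and the residual of the Newton
step is `-H e⁺`, so the forcing condition reads `‖H e⁺‖ ≤ γ ‖H e‖ + o(‖e‖ + ‖e⁺‖)`. As `H` is
bounded below, the error terms are `o(‖H e‖ + ‖H e⁺‖)`, and near `x*` they fit into the gap between
`γ` and `γ'`. Hence `‖H e‖` is a Lyapunov function, and its small sublevel sets are invariant.
-/

open scoped NNReal Topology

section LyapunovFunction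

variable {X : Type*} [PseudoMetricSpace X] {K : ℝ≥0} {q : ℝ} {a : X}

theorem tendsto_of_dist_le_of_le_mul {x : ℕ → X} {u : ℕ → ℝ} (hq0 : 0 ≤ q) (hq1 : q < 1)
    (hdist : ∀ t, dist (x t) a ≤ K * u t) (hu : ∀ t, u (t + 1) ≤ q * u t) :
    Tendsto x atTop (𝓝 a) := by
  have hbound (t : ℕ) : dist (x t) a ≤ K * (q ^ t * u 0) :=
    (hdist t).trans (mul_le_mul_of_nonneg_left (le_geom hq0 t fun k _ => hu k) K.coe_nonneg)
  have hlim : Tendsto (fun t => K * (q ^ t * u 0)) atTop (𝓝 0) := by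
    simpa using ((tendsto_pow_atTop_nhds_zero_of_lt_one hq0 hq1).mul_const (u 0)).const_mul (K : ℝ)
  exact tendsto_iff_dist_tendsto_zero.2 (squeeze_zero (fun _ => dist_nonneg) hbound hlim)

theorem exists_pos_forall_tendsto_and_le_mul {R : X → X → Prop} {φ : X → ℝ}
    (hq0 : 0 ≤ q) (hq1 : q < 1) (hφ : ContinuousAt φ a) (hφa : φ a = 0)
    (hdist : ∀ y, dist y a ≤ K * φ y) (hstep : ∀ᶠ y in 𝓝 a, ∀ z, R y z → φ z ≤ q * φ y) :
    ∃ δ > 0, ∀ x : ℕ → X, (∀ t, R (x t) (x (t + 1))) → dist (x 0) a ≤ δ →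
      Tendsto x atTop (𝓝 a) ∧ ∀ t, φ (x (t + 1)) ≤ q * φ (x t) := by
  obtain ⟨ε, hε, hball⟩ := Metric.eventually_nhds_iff.1 hstep
  have hcontract {y z : X} (hy : K * φ y < ε) (hyz : R y z) : φ z ≤ q * φ y :=
    hball ((hdist y).trans_lt hy) z hyz
  have hinvariant {y z : X} (hy : K * φ y < ε) (hyz : R y z) : K * φ z < ε :=
    calc K * φ z ≤ K * (q * φ y) := mul_le_mul_of_nonneg_left (hcontract hy hyz) K.coe_nonneg
      _ = q * (K * φ y) := mul_left_comm ..
      _ ≤ K * φ y := mul_le_of_le_one_left (dist_nonneg.trans (hdist y)) hq1.le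
      _ < ε := hy
  have hsmall : ∀ᶠ y in 𝓝 a, K * φ y < ε :=
    (hφ.const_mul (K : ℝ)).eventually_lt continuousAt_const (by simpa [hφa] using hε)
  obtain ⟨δ, hδ, hδball⟩ := Metric.nhds_basis_closedBall.eventually_iff.1 hsmall
  refine ⟨δ, hδ, fun x hx hx0 => ?_⟩
  have hmem (t : ℕ) : K * φ (x t) < ε := by
    induction t with
    | zero => exact hδball hx0
    | succ t ih => exact hinvariant ih (hx t)
  have hrate (t : ℕ) : φ (x (t + 1)) ≤ q * φ (x t) := hcontract (hmem t) (hx t)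
  exact ⟨tendsto_of_dist_le_of_le_mul hq0 hq1 (fun t => hdist (x t)) hrate, hrate⟩

end LyapunovFunction

section InexactNewton

variable {𝕜 E F : Type*} [NontriviallyNormedField 𝕜]
  [NormedAddCommGroup E] [NormedSpace 𝕜 E] [NormedAddCommGroup F] [NormedSpace 𝕜 F]

/-- The relation `a ↦ b` of an inexact Newton iteration for the equation `G = 0` with derivative
`G'` and forcing term `γ`: the step `v = a - b` solves the Newton equation `G' a v = G a` up to a
residual of norm at most `γ * ‖G a‖`. Any family `G'` of continuous linear maps is allowed, so that
approximate derivatives are included. -/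
def IsInexactNewtonStep (G : E → F) (G' : E → E →L[𝕜] F) (γ : ℝ) (a b : E) : Prop :=
  ‖G' a (a - b) - G a‖ ≤ γ * ‖G a‖

theorem norm_apply_le_of_norm_residual_le {H A : E →L[𝕜] F} {g : F} {u w : E} {γ η : ℝ}
    (hγ : 0 ≤ γ) (hA : ‖A - H‖ ≤ η) (hg : ‖g - H u‖ ≤ η * ‖u‖)
    (hres : ‖A (u - w) - g‖ ≤ γ * ‖g‖) :
    ‖H w‖ ≤ γ * ‖H u‖ + η * ((2 + γ) * ‖u‖ + ‖w‖) := by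
  have hdecomp : H w = (A - H) (u - w) - (A (u - w) - g) - (g - H u) := by
    simp only [sub_apply, map_sub]
    abel
  have happrox : ‖(A - H) (u - w)‖ ≤ η * (‖u‖ + ‖w‖) :=
    (A - H).le_of_opNorm_le_of_le hA (norm_sub_le u w)
  have hgnorm : ‖g‖ ≤ ‖H u‖ + η * ‖u‖ := (norm_le_norm_add_norm_sub' g (H u)).trans (by gcongr)
  calc ‖H w‖ = ‖(A - H) (u - w) - (A (u - w) - g) - (g - H u)‖ := congrArg _ hdecomp
    _ ≤ ‖(A - H) (u - w)‖ + ‖A (u - w) - g‖ + ‖g - H u‖ :=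
      (norm_sub_le _ _).trans (by gcongr; exact norm_sub_le _ _)
    _ ≤ η * (‖u‖ + ‖w‖) + γ * (‖H u‖ + η * ‖u‖) + η * ‖u‖ := by
      gcongr
      exact hres.trans (by gcongr)
    _ = γ * ‖H u‖ + η * ((2 + γ) * ‖u‖ + ‖w‖) := by ring

theorem norm_apply_le_mul_of_norm_residual_le {H A : E →L[𝕜] F} {g : F} {u w : E} {K : ℝ≥0}
    {γ γ' η : ℝ} (hγ : 0 ≤ γ) (hH : AntilipschitzWith K H) (hηK : η * K < 1)
    (hrate : γ + (2 + γ) * (η * K) ≤ γ' * (1 - η * K)) (hA : ‖A - H‖ ≤ η)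
    (hg : ‖g - H u‖ ≤ η * ‖u‖) (hres : ‖A (u - w) - g‖ ≤ γ * ‖g‖) :
    ‖H w‖ ≤ γ' * ‖H u‖ := by
  have hη : 0 ≤ η := (norm_nonneg _).trans hA
  have habsorb : ‖H w‖ ≤ γ * ‖H u‖ + η * ((2 + γ) * (K * ‖H u‖) + K * ‖H w‖) :=
    (norm_apply_le_of_norm_residual_le hγ hA hg hres).trans
      (by gcongr <;> exact H.bound_of_antilipschitz hH _)
  refine le_of_mul_le_mul_left ?_ (sub_pos.2 hηK)
  calc (1 - η * K) * ‖H w‖ ≤ (γ + (2 + γ) * (η * K)) * ‖H u‖ := by linarith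
    _ ≤ γ' * (1 - η * K) * ‖H u‖ := by gcongr
    _ = (1 - η * K) * (γ' * ‖H u‖) := by ring

theorem exists_pos_mul_lt_one_and_rate_le {γ γ' : ℝ} (h : γ < γ') (K : ℝ) :
    ∃ η > 0, η * K < 1 ∧ γ + (2 + γ) * (η * K) ≤ γ' * (1 - η * K) := by
  have hone : ∀ᶠ η in 𝓝 (0 : ℝ), η * K < 1 :=
    ContinuousAt.eventually_lt (by fun_prop) continuousAt_const (by simp)
  have hrate : ∀ᶠ η in 𝓝 (0 : ℝ), γ + (2 + γ) * (η * K) < γ' * (1 - η * K) :=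
    ContinuousAt.eventually_lt (by fun_prop) (by fun_prop) (by simpa using h)
  obtain ⟨η, ⟨hη1, hηrate⟩, hη⟩ :=
    (((hone.and hrate).filter_mono nhdsWithin_le_nhds).and self_mem_nhdsWithin).exists
      (f := 𝓝[>] (0 : ℝ))
  exact ⟨η, hη, hη1, hηrate.le⟩

variable {G : E → F} {G' : E → E →L[𝕜] F} {xs : E} {K : ℝ≥0} {γ γ' : ℝ}

theorem eventually_norm_apply_le_of_isInexactNewtonStep (hG : HasFDerivAt G (G' xs) xs)
    (hG' : ContinuousAt G' xs) (hxs : G xs = 0) (hH : AntilipschitzWith K (G' xs))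
    (hγ : 0 ≤ γ) (hγγ' : γ < γ') :
    ∀ᶠ a in 𝓝 xs, ∀ b, IsInexactNewtonStep G G' γ a b →
      ‖G' xs (b - xs)‖ ≤ γ' * ‖G' xs (a - xs)‖ := by
  obtain ⟨η, hη, hηK, hrate⟩ := exists_pos_mul_lt_one_and_rate_le hγγ' K
  have hG'near : ∀ᶠ a in 𝓝 xs, ‖G' a - G' xs‖ ≤ η :=
    (Metric.tendsto_nhds.1 hG' η hη).mono fun a ha => by
      simpa only [dist_eq_norm] using ha.le
  have hGnear : ∀ᶠ a in 𝓝 xs, ‖G a - G' xs (a - xs)‖ ≤ η * ‖a - xs‖ := by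
    simpa only [hxs, sub_zero] using hG.isLittleO.def hη
  filter_upwards [hG'near, hGnear] with a hA hg b hstep
  refine norm_apply_le_mul_of_norm_residual_le hγ hH hηK hrate hA hg ?_
  simpa only [IsInexactNewtonStep, sub_sub_sub_cancel_right] using hstep

theorem inexact_newton_linear_convergence_general (hG : HasFDerivAt G (G' xs) xs)
    (hG' : ContinuousAt G' xs) (hxs : G xs = 0) (hH : AntilipschitzWith K (G' xs))
    (hγ : 0 ≤ γ) (hγγ' : γ < γ') (hγ' : γ' < 1) :
    ∃ δ > 0, ∀ x : ℕ → E, (∀ t, IsInexactNewtonStep G G' γ (x t) (x (t + 1))) →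
      ‖x 0 - xs‖ ≤ δ →
        Tendsto x atTop (𝓝 xs) ∧
          ∀ t, ‖G' xs (x (t + 1) - xs)‖ ≤ γ' * ‖G' xs (x t - xs)‖ := by
  simp only [← dist_eq_norm (_ : E) xs]
  refine exists_pos_forall_tendsto_and_le_mul (K := K) (φ := fun y => ‖G' xs (y - xs)‖)
    (hγ.trans hγγ'.le) hγ' (by fun_prop) (by simp) (fun y => ?_)
    (eventually_norm_apply_le_of_isInexactNewtonStep hG hG' hxs hH hγ hγγ')
  simpa only [dist_eq_norm] using (G' xs).bound_of_antilipschitz hH (y - xs)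

end InexactNewton

theorem exists_antilipschitzWith_of_inner_apply_ne_zero {𝕜 E : Type*} [RCLike 𝕜]
    [NormedAddCommGroup E] [InnerProductSpace 𝕜 E] [FiniteDimensional 𝕜 E] {H : E →L[𝕜] E}
    (hH : ∀ y, y ≠ 0 → inner 𝕜 y (H y) ≠ 0) : ∃ K, AntilipschitzWith K H := by
  have hker : LinearMap.ker (H : E →ₗ[𝕜] E) = ⊥ :=
    LinearMap.ker_eq_bot'.2 fun y hy => by
      by_contra hne
      exact hH y hne ((congrArg (inner 𝕜 y) hy).trans (inner_zero_right y))
  obtain ⟨K, -, hK⟩ := LinearMap.exists_antilipschitzWith (H : E →ₗ[𝕜] E) hker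
  exact ⟨K, hK⟩

theorem contDiff_gradient {E : Type*} [NormedAddCommGroup E] [InnerProductSpace ℝ E]
    [CompleteSpace E] {f : E → ℝ} {m n : WithTop ℕ∞} (hf : ContDiff ℝ n f) (hmn : m + 1 ≤ n) :
    ContDiff ℝ m (gradient f) :=
  (InnerProductSpace.toDual ℝ E).symm.contDiff.comp (hf.fderiv_right hmn)

/-- linear convergence of inexact Newton. If `F` is twice continuously
differentiable, `∇F(x*) = 0` with positive definite Hessian at `x*`, and the iterates
satisfy `x^{t+1} = x^t - v^t` with `‖∇²F(x^t)v^t - ∇F(x^t)‖ ≤ γ‖∇F(x^t)‖`, `0 ≤ γ < 1`,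
then for every `γ' ∈ (γ, 1)` there is `δ > 0` such that any such sequence started with
`‖x⁰ - x*‖ ≤ δ` converges to `x*` with
`‖∇²F(x*)(x^{t+1} - x*)‖ ≤ γ'‖∇²F(x*)(x^t - x*)‖` for all `t`. -/
theorem inexact_newton_linear_convergence {p : ℕ}
    (F : EuclideanSpace ℝ (Fin p) → ℝ) (xs : EuclideanSpace ℝ (Fin p)) (γ : ℝ)
    (hF : ContDiff ℝ 2 F) (hcrit : gradient F xs = 0)
    (hpos : ∀ y : EuclideanSpace ℝ (Fin p), y ≠ 0 →
      0 < ⟪y, fderiv ℝ (gradient F) xs y⟫)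
    (hγ0 : 0 ≤ γ) (hγ1 : γ < 1) :
    ∀ γ' : ℝ, γ < γ' → γ' < 1 → ∃ δ > (0 : ℝ),
      ∀ x : ℕ → EuclideanSpace ℝ (Fin p),
        (∀ t, ‖fderiv ℝ (gradient F) (x t) (x t - x (t + 1)) - gradient F (x t)‖ ≤
          γ * ‖gradient F (x t)‖) →
        ‖x 0 - xs‖ ≤ δ →
        Tendsto x atTop (nhds xs) ∧
          ∀ t, ‖fderiv ℝ (gradient F) xs (x (t + 1) - xs)‖ ≤
            γ' * ‖fderiv ℝ (gradient F) xs (x t - xs)‖ := by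
  intro γ' hγγ' hγ'
  have hG : ContDiff ℝ 1 (gradient F) := contDiff_gradient hF (by norm_num)
  obtain ⟨K, hK⟩ := exists_antilipschitzWith_of_inner_apply_ne_zero fun y hy => (hpos y hy).ne'
  exact inexact_newton_linear_convergence_general
    (hG.differentiable one_ne_zero xs).hasFDerivAt (hG.continuous_fderiv one_ne_zero).continuousAt
    hcrit hK hγ0 hγγ' hγ'
end

section
/- Let A₁, …, Aₙ be real symmetric positive semidefinite p×p matrices with ‖Aᵢ‖ ≤ K for all i, and let Ā = (1/n)Σᵢ Aᵢ. Let c > 0, 0 < ε < 1, 0 < δ < 1, and let s be a positive integer with s ≥ 16K² log(2p/δ)/(c²ε²). Draw indices j₁, …, j_s independently and uniformly at random from {1, …, n} and set H = (1/s)Σ_{k=1}^{s} A_{j_k}. Then with probability at least 1 − δ, ‖H − Ā‖ ≤ εc. -/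
open Matrix

/-!
The argument is an exponential-moment bound for the trace. Expanding in eigenbases of `A` and `B`,
the scalar inequality `eᵈ - 1 - d ≤ d² (eᵈ / 6 + 1 / 3)` becomes
`tr e^A - tr e^B ≤ tr (e^B (A - B)) + tr (e^A (A - B)²) / 6 + tr (e^B (A - B)²) / 3`.
For a centred random self-adjoint `Y` with `‖Y‖ ≤ r` and `r² ≤ 2` the linear term averages out,
leaving `𝔼 tr e^(S + Y) ≤ e^(r² / 2) tr e^S` with neither Golden–Thompson nor Lieb's theorem.
Adding independent summands one at a time and applying Markov's inequality gives a matrix Hoeffding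
inequality, here applied to the differences `Aᵢ - Ā`, whose norms are at most `2K`.
-/

open MeasureTheory ProbabilityTheory
open NormedSpace (exp)
open Module (finrank)
open scoped RealInnerProductSpace

lemma exp_sub_one_sub_self_le (x : ℝ) :
    Real.exp x - 1 - x ≤ x ^ 2 * (Real.exp x / 6 + 1 / 3) := by
  set g : ℝ → ℝ := fun y ↦ y ^ 2 * (Real.exp y / 6 + 1 / 3) - (Real.exp y - 1 - y)
  set g' : ℝ → ℝ := fun y ↦ Real.exp y * (y ^ 2 / 6 + y / 3 - 1) + 2 * y / 3 + 1
  have hg (y : ℝ) : HasDerivAt g (g' y) y := by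
    have := (((hasDerivAt_id y).pow 2).mul
      (((Real.hasDerivAt_exp y).div_const 6).add_const (1 / 3))).sub
      (((Real.hasDerivAt_exp y).sub_const 1).sub (hasDerivAt_id y))
    refine this.congr_deriv ?_
    simp only [g', Pi.pow_apply, id_eq]
    ring
  have hg' (y : ℝ) : HasDerivAt g' (Real.exp y * (y ^ 2 / 6 + 2 * y / 3 - 2 / 3) + 2 / 3) y := by
    have := (((Real.hasDerivAt_exp y).mul (((((hasDerivAt_id y).pow 2).div_const 6).add
      ((hasDerivAt_id y).div_const 3)).sub_const 1)).add
      (((hasDerivAt_id y).const_mul 2).div_const 3)).add_const 1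
    refine this.congr_deriv ?_
    simp only [Pi.add_apply, Pi.pow_apply, id_eq]
    ring
  have hderiv : deriv g = g' := funext fun y ↦ (hg y).deriv
  have hconvex : ConvexOn ℝ Set.univ g := by
    refine convexOn_univ_of_deriv2_nonneg (fun y ↦ (hg y).differentiableAt)
      (hderiv ▸ fun y ↦ (hg' y).differentiableAt) fun y ↦ ?_
    rw [Function.iterate_succ_apply, Function.iterate_one, hderiv, (hg' y).deriv]
    have hmul : Real.exp y * Real.exp (-y) = 1 := by rw [← Real.exp_add]; simp
    nlinarith [mul_le_mul_of_nonneg_left (Real.one_sub_le_exp_neg y) (Real.exp_pos y).le,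
      mul_nonneg (Real.exp_pos y).le (sq_nonneg y)]
  have hmin : IsMinOn g Set.univ 0 := by
    refine hconvex.isMinOn_of_rightDeriv_eq_zero (by simp) ?_
    rw [(hg 0).hasDerivWithinAt.derivWithin (uniqueDiffWithinAt_Ioi 0)]
    simp [g']
  have hg0 : g 0 = 0 := by simp [g]
  exact sub_nonneg.1 (hg0.symm.trans_le (hmin (Set.mem_univ x)))

lemma exp_sub_exp_le (a b : ℝ) :
    Real.exp a - Real.exp b ≤
      (a - b) * Real.exp b + (a - b) ^ 2 * (Real.exp a / 6 + Real.exp b / 3) := by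
  have hexp : Real.exp a = Real.exp (a - b) * Real.exp b := by rw [← Real.exp_add, sub_add_cancel]
  have := mul_le_mul_of_nonneg_right (exp_sub_one_sub_self_le (a - b)) (Real.exp_pos b).le
  rw [hexp]
  linarith

lemma one_add_div_three_le_mul_exp {x : ℝ} (h0 : 0 ≤ x) (h2 : x ≤ 2) :
    1 + x / 3 ≤ (1 - x / 6) * Real.exp (x / 2) := by
  have hexp := Real.quadratic_le_exp_of_nonneg (by positivity : 0 ≤ x / 2)
  calc 1 + x / 3 ≤ 1 + x / 3 + x ^ 2 * (2 - x) / 48 := by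
        have : 0 ≤ 2 - x := sub_nonneg.2 h2
        exact le_add_of_nonneg_right (by positivity)
    _ = (1 - x / 6) * (1 + x / 2 + (x / 2) ^ 2 / 2) := by ring
    _ ≤ (1 - x / 6) * Real.exp (x / 2) := by gcongr; linarith

lemma exp_apply_of_apply_eq_smul {F : Type*} [NormedAddCommGroup F] [NormedSpace ℝ F]
    [CompleteSpace F] {T : F →L[ℝ] F} {x : F} {c : ℝ} (h : T x = c • x) :
    exp T x = Real.exp c • x := by
  have hpow (n : ℕ) : (T ^ n) x = c ^ n • x := by
    induction n with
    | zero => simp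
    | succ n ih => rw [pow_succ, mul_apply_eq_comp, h, map_smul, ih, smul_smul, pow_succ']
  have hT := (NormedSpace.exp_series_hasSum_exp' (𝕂 := ℝ) T).mapL
    (ContinuousLinearMap.apply ℝ F x)
  have hc := (NormedSpace.exp_series_hasSum_exp' (𝕂 := ℝ) c).smul_const x
  rw [Real.exp_eq_exp_ℝ]
  exact hT.unique (by simpa [hpow, smul_smul] using hc)

section Operators

variable {E : Type*} [NormedAddCommGroup E] [InnerProductSpace ℝ E] [FiniteDimensional ℝ E]

/-- The trace as a continuous linear functional on the operators of a finite-dimensional inner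
product space; continuity is what lets it commute with integration. -/
noncomputable def opTrace : (E →L[ℝ] E) →L[ℝ] ℝ :=
  (LinearMap.trace ℝ E ∘ₗ ContinuousLinearMap.coeLM ℝ).toContinuousLinearMap

section Spectral

variable {ι κ : Type*} [Fintype ι] [Fintype κ] {A B : E →L[ℝ] E}
  {u : OrthonormalBasis ι ℝ E} {v : OrthonormalBasis κ ℝ E} {a : ι → ℝ} {b : κ → ℝ}

lemma exists_orthonormalBasis_apply_eq_smul (hA : IsSelfAdjoint A) :
    ∃ (u : OrthonormalBasis (Fin (finrank ℝ E)) ℝ E) (a : Fin (finrank ℝ E) → ℝ),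
      ∀ i, A (u i) = a i • u i :=
  ⟨hA.isSymmetric.eigenvectorBasis rfl, hA.isSymmetric.eigenvalues rfl,
    hA.isSymmetric.apply_eigenvectorBasis rfl⟩

lemma opTrace_exp_mul (hu : ∀ i, A (u i) = a i • u i) (Y : E →L[ℝ] E) :
    opTrace (exp A * Y) = ∑ i, Real.exp (a i) * ⟪u i, Y (u i)⟫ := by
  calc opTrace (exp A * Y) = opTrace (Y * exp A) :=
        LinearMap.trace_mul_comm ℝ (exp A).toLinearMap Y.toLinearMap
    _ = ∑ i, ⟪u i, Y (exp A (u i))⟫ := LinearMap.trace_eq_sum_inner _ u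
    _ = ∑ i, Real.exp (a i) * ⟪u i, Y (u i)⟫ := by
        simp only [exp_apply_of_apply_eq_smul (hu _), map_smul, real_inner_smul_right]

lemma opTrace_exp (hu : ∀ i, A (u i) = a i • u i) : opTrace (exp A) = ∑ i, Real.exp (a i) := by
  simpa using opTrace_exp_mul hu 1

lemma opTrace_exp_nonneg (hA : IsSelfAdjoint A) : 0 ≤ opTrace (exp A) := by
  obtain ⟨u, a, hu⟩ := exists_orthonormalBasis_apply_eq_smul hA
  rw [opTrace_exp hu]
  positivity

lemma inner_apply_of_apply_eq_smul (hA : IsSelfAdjoint A) (hu : ∀ i, A (u i) = a i • u i)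
    (i : ι) (x : E) : ⟪u i, A x⟫ = a i * ⟪u i, x⟫ := by
  rw [← ContinuousLinearMap.coe_coe, ← hA.isSymmetric, ContinuousLinearMap.coe_coe, hu,
    real_inner_smul_left]

lemma inner_sub_apply_of_apply_eq_smul (hA : IsSelfAdjoint A) (hu : ∀ i, A (u i) = a i • u i)
    (hv : ∀ j, B (v j) = b j • v j) (i : ι) (j : κ) :
    ⟪u i, (A - B) (v j)⟫ = (a i - b j) * ⟪u i, v j⟫ := by
  rw [_root_.sub_apply, inner_sub_right, inner_apply_of_apply_eq_smul hA hu, hv,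
    real_inner_smul_right, sub_mul]

lemma opTrace_exp_mul_sub (hA : IsSelfAdjoint A) (hu : ∀ i, A (u i) = a i • u i)
    (hv : ∀ j, B (v j) = b j • v j) :
    opTrace (exp B * (A - B)) = ∑ i, ∑ j, (a i - b j) * Real.exp (b j) * ⟪u i, v j⟫ ^ 2 := by
  rw [opTrace_exp_mul hv, Finset.sum_comm]
  refine Finset.sum_congr rfl fun j _ ↦ ?_
  rw [← u.sum_inner_mul_inner, Finset.mul_sum]
  refine Finset.sum_congr rfl fun i _ ↦ ?_
  rw [inner_sub_apply_of_apply_eq_smul hA hu hv, real_inner_comm (u i)]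
  ring

lemma opTrace_exp_mul_sub_sq (hA : IsSelfAdjoint A) (hB : IsSelfAdjoint B)
    (hu : ∀ i, A (u i) = a i • u i) (hv : ∀ j, B (v j) = b j • v j) :
    opTrace (exp B * (A - B) ^ 2) =
      ∑ i, ∑ j, (a i - b j) ^ 2 * Real.exp (b j) * ⟪u i, v j⟫ ^ 2 := by
  rw [opTrace_exp_mul hv, Finset.sum_comm]
  refine Finset.sum_congr rfl fun j _ ↦ ?_
  have hsq : ⟪v j, ((A - B) ^ 2) (v j)⟫ = ∑ i, ⟪u i, (A - B) (v j)⟫ ^ 2 := by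
    rw [u.sum_sq_inner_right, sq (A - B), mul_apply_eq_comp, ← real_inner_self_eq_norm_sq]
    exact ((hA.sub hB).isSymmetric (v j) _).symm
  simp only [hsq, Finset.mul_sum, inner_sub_apply_of_apply_eq_smul hA hu hv]
  exact Finset.sum_congr rfl fun i _ ↦ by ring

lemma opTrace_exp_eq_sum_sum (u : OrthonormalBasis ι ℝ E) (hv : ∀ j, B (v j) = b j • v j) :
    opTrace (exp B) = ∑ i, ∑ j, Real.exp (b j) * ⟪u i, v j⟫ ^ 2 := by
  rw [opTrace_exp hv, Finset.sum_comm]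
  simp only [← Finset.mul_sum, u.sum_sq_inner_right, v.norm_eq_one, one_pow, mul_one]

end Spectral

lemma opTrace_exp_sub_opTrace_exp_le {A B : E →L[ℝ] E} (hA : IsSelfAdjoint A)
    (hB : IsSelfAdjoint B) :
    opTrace (exp A) - opTrace (exp B) ≤ opTrace (exp B * (A - B)) +
      (opTrace (exp A * (A - B) ^ 2) / 6 + opTrace (exp B * (A - B) ^ 2) / 3) := by
  obtain ⟨u, a, hu⟩ := exists_orthonormalBasis_apply_eq_smul hA
  obtain ⟨v, b, hv⟩ := exists_orthonormalBasis_apply_eq_smul hB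
  have hexpA : opTrace (exp A) = ∑ i, ∑ j, Real.exp (a i) * ⟪u i, v j⟫ ^ 2 := by
    rw [opTrace_exp_eq_sum_sum v hu, Finset.sum_comm]
    simp only [real_inner_comm]
  have hsqA : opTrace (exp A * (A - B) ^ 2) =
      ∑ i, ∑ j, (a i - b j) ^ 2 * Real.exp (a i) * ⟪u i, v j⟫ ^ 2 := by
    rw [← neg_sub B A, neg_sq, opTrace_exp_mul_sub_sq hB hA hv hu, Finset.sum_comm]
    simp only [real_inner_comm, sub_sq_comm (b _)]
  rw [hexpA, hsqA, opTrace_exp_eq_sum_sum u hv, opTrace_exp_mul_sub hA hu hv,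
    opTrace_exp_mul_sub_sq hA hB hu hv]
  simp only [Finset.sum_div, ← Finset.sum_add_distrib, ← Finset.sum_sub_distrib]
  refine Finset.sum_le_sum fun i _ ↦ Finset.sum_le_sum fun j _ ↦ ?_
  have := mul_le_mul_of_nonneg_right (exp_sub_exp_le (a i) (b j)) (sq_nonneg ⟪u i, v j⟫)
  linarith

lemma opTrace_exp_mul_sq_le {T Y : E →L[ℝ] E} {r : ℝ} (hT : IsSelfAdjoint T)
    (hY : IsSelfAdjoint Y) (hYr : ‖Y‖ ≤ r) :
    opTrace (exp T * Y ^ 2) ≤ r ^ 2 * opTrace (exp T) := by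
  obtain ⟨u, a, hu⟩ := exists_orthonormalBasis_apply_eq_smul hT
  rw [opTrace_exp_mul hu, opTrace_exp hu, Finset.mul_sum]
  refine Finset.sum_le_sum fun i _ ↦ ?_
  rw [mul_comm]
  gcongr
  calc ⟪u i, (Y ^ 2) (u i)⟫ = ‖Y (u i)‖ ^ 2 := by
        rw [sq Y, mul_apply_eq_comp, ← real_inner_self_eq_norm_sq]
        exact (hY.isSymmetric (u i) _).symm
    _ ≤ r ^ 2 := by
        gcongr
        exact (Y.unit_le_opNorm _ (u.norm_eq_one i).le).trans hYr

lemma opNorm_le_of_apply_eq_smul {ι : Type*} [Fintype ι] {T : E →L[ℝ] E} {r : ℝ}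
    {u : OrthonormalBasis ι ℝ E} {a : ι → ℝ} (hT : IsSelfAdjoint T)
    (hu : ∀ i, T (u i) = a i • u i) (hr : 0 ≤ r) (ha : ∀ i, |a i| ≤ r) : ‖T‖ ≤ r := by
  refine T.opNorm_le_bound hr fun x ↦ le_of_sq_le_sq ?_ (by positivity)
  rw [mul_pow, ← u.sum_sq_inner_right, ← u.sum_sq_inner_right x, Finset.mul_sum]
  refine Finset.sum_le_sum fun i _ ↦ ?_
  rw [inner_apply_of_apply_eq_smul hT hu, mul_pow]
  exact mul_le_mul_of_nonneg_right (sq_le_sq.2 ((ha i).trans (le_abs_self r))) (sq_nonneg _)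

lemma exp_le_opTrace_exp_add_opTrace_exp_neg {T : E →L[ℝ] E} {r : ℝ} (hT : IsSelfAdjoint T)
    (hr : 0 ≤ r) (hrT : r < ‖T‖) :
    Real.exp r ≤ opTrace (exp T) + opTrace (exp (-T)) := by
  obtain ⟨u, a, hu⟩ := exists_orthonormalBasis_apply_eq_smul hT
  have hneg (i) : (-T) (u i) = (-a i) • u i := by simp [hu]
  obtain ⟨i, hi⟩ : ∃ i, r < |a i| := by
    by_contra! ha
    exact hrT.not_ge (opNorm_le_of_apply_eq_smul hT hu hr ha)
  rw [opTrace_exp hu, opTrace_exp hneg, ← Finset.sum_add_distrib]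
  calc Real.exp r ≤ Real.exp |a i| := Real.exp_le_exp.2 hi.le
    _ ≤ Real.exp (a i) + Real.exp (-a i) := Real.exp_abs_le (a i)
    _ ≤ ∑ i, (Real.exp (a i) + Real.exp (-a i)) :=
        Finset.single_le_sum (f := fun i ↦ Real.exp (a i) + Real.exp (-a i))
          (fun _ _ ↦ by positivity) (Finset.mem_univ i)

section Hoeffding

variable {Ω : Type*} [MeasurableSpace Ω] {P : Measure Ω} {κ : Type*}

lemma ae_isSelfAdjoint_sum {F : Type*} [AddCommMonoid F] [StarAddMonoid F] {X : κ → Ω → F}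
    (hX : ∀ k, ∀ᵐ ω ∂P, IsSelfAdjoint (X k ω)) (s : Finset κ) :
    ∀ᵐ ω ∂P, IsSelfAdjoint (∑ k ∈ s, X k ω) := by
  filter_upwards [(ae_ball_iff s.countable_toSet).2 fun k _ ↦ hX k] with ω hω
  exact isSelfAdjoint_sum s hω

lemma ae_norm_sum_le {F : Type*} [SeminormedAddCommGroup F] {X : κ → Ω → F} {R : ℝ}
    (hX : ∀ k, ∀ᵐ ω ∂P, ‖X k ω‖ ≤ R) (s : Finset κ) :
    ∀ᵐ ω ∂P, ‖∑ k ∈ s, X k ω‖ ≤ s.card * R := by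
  filter_upwards [(ae_ball_iff s.countable_toSet).2 fun k _ ↦ hX k] with ω hω
  simpa using norm_sum_le_of_le s hω

lemma integrable_comp_of_ae_norm_le [IsFiniteMeasure P] {F G : Type*} [NormedAddCommGroup F]
    [ProperSpace F] [NormedAddCommGroup G] {f : F → G} (hf : Continuous f) {Z : Ω → F}
    (hZ : AEStronglyMeasurable Z P) {R : ℝ} (hZR : ∀ᵐ ω ∂P, ‖Z ω‖ ≤ R) :
    Integrable (fun ω ↦ f (Z ω)) P := by
  obtain ⟨C, hC⟩ := (isCompact_closedBall (0 : F) R).exists_bound_of_continuousOn hf.continuousOn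
  refine .of_bound (hf.comp_aestronglyMeasurable hZ) C (hZR.mono fun ω hω ↦ hC _ ?_)
  simpa using hω

lemma integral_prodMk_of_indepFun [IsFiniteMeasure P] {α β G : Type*} [MeasurableSpace α]
    [MeasurableSpace β] [NormedAddCommGroup G] [NormedSpace ℝ G] {X : Ω → α} {Y : Ω → β}
    {f : α × β → G} (hXY : X ⟂ᵢ[P] Y) (hX : AEMeasurable X P) (hY : AEMeasurable Y P)
    (hf : StronglyMeasurable f) (hfi : Integrable (fun ω ↦ f (X ω, Y ω)) P) :
    ∫ ω, f (X ω, Y ω) ∂P = ∫ ω, ∫ ω', f (X ω, Y ω') ∂P ∂P := by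
  have hmap := hXY.map_prod_eq_prod_map_map hX hY
  have hInt : Integrable f ((P.map X).prod (P.map Y)) := by
    rw [← hmap]
    exact (integrable_map_measure hf.aestronglyMeasurable (hX.prodMk hY)).2 hfi
  rw [← integral_map (hX.prodMk hY) hf.aestronglyMeasurable, hmap, integral_prod _ hInt,
    integral_map hX hf.integral_prod_right'.aestronglyMeasurable]
  refine integral_congr_ae (.of_forall fun ω ↦ ?_)
  exact integral_map hY (hf.comp_measurable measurable_prodMk_left).aestronglyMeasurable

lemma continuous_opTrace_exp : Continuous fun T : E →L[ℝ] E ↦ opTrace (exp T) := by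
  let _ := NormedAlgebra.restrictScalars ℚ ℝ (E →L[ℝ] E)
  exact opTrace.continuous.comp NormedSpace.exp_continuous

lemma measureReal_lt_norm_le_integral_opTrace [IsFiniteMeasure P] {Z : Ω → E →L[ℝ] E}
    {B θ u : ℝ} (hZ : AEMeasurable Z P) (hsa : ∀ᵐ ω ∂P, IsSelfAdjoint (Z ω))
    (hZB : ∀ᵐ ω ∂P, ‖Z ω‖ ≤ B) (hθ : 0 < θ) (hu : 0 ≤ u) :
    Real.exp (θ * u) * P.real {ω | u < ‖Z ω‖} ≤
      ∫ ω, opTrace (exp (θ • Z ω)) ∂P + ∫ ω, opTrace (exp (-θ • Z ω)) ∂P := by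
  have hsmul (a : ℝ) : ∀ᵐ ω ∂P, IsSelfAdjoint (a • Z ω) :=
    hsa.mono fun ω hω ↦ (IsSelfAdjoint.all a).smul hω
  have hInt (a : ℝ) : Integrable (fun ω ↦ opTrace (exp (a • Z ω))) P :=
    integrable_comp_of_ae_norm_le (continuous_opTrace_exp.comp (continuous_const_smul a))
      hZ.aestronglyMeasurable hZB
  rw [← integral_add (hInt θ) (hInt (-θ))]
  refine le_trans ?_ (mul_meas_ge_le_integral_of_nonneg ?_ ((hInt θ).add (hInt (-θ)))
    (Real.exp (θ * u)))
  · refine mul_le_mul_of_nonneg_left (ENNReal.toReal_mono (by finiteness)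
      (measure_mono_ae ?_)) (Real.exp_pos _).le
    filter_upwards [hsmul θ] with ω hω (huZ : u < ‖Z ω‖)
    have := exp_le_opTrace_exp_add_opTrace_exp_neg hω (r := θ * u) (by positivity)
      (by rw [norm_smul, Real.norm_of_nonneg hθ.le]; gcongr)
    rwa [← neg_smul] at this
  · filter_upwards [hsmul θ, hsmul (-θ)] with ω h₁ h₂
    exact add_nonneg (opTrace_exp_nonneg h₁) (opTrace_exp_nonneg h₂)

lemma opTrace_exp_add_le {S Y : E →L[ℝ] E} {r : ℝ} (hS : IsSelfAdjoint S) (hY : IsSelfAdjoint Y)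
    (hYr : ‖Y‖ ≤ r) :
    (1 - r ^ 2 / 6) * opTrace (exp (S + Y)) ≤
      (1 + r ^ 2 / 3) * opTrace (exp S) + opTrace (exp S * Y) := by
  have h := opTrace_exp_sub_opTrace_exp_le (hS.add hY) hS
  rw [add_sub_cancel_left] at h
  linarith [opTrace_exp_mul_sq_le (hS.add hY) hY hYr, opTrace_exp_mul_sq_le hS hY hYr]

variable [IsProbabilityMeasure P]

lemma integral_opTrace_exp_add_le {S : E →L[ℝ] E} {Y : Ω → E →L[ℝ] E} {r : ℝ}
    (hS : IsSelfAdjoint S) (hY : AEMeasurable Y P) (hYsa : ∀ᵐ ω ∂P, IsSelfAdjoint (Y ω))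
    (hYr : ∀ᵐ ω ∂P, ‖Y ω‖ ≤ r) (hY0 : ∫ ω, Y ω ∂P = 0) (hr : r ^ 2 ≤ 2) :
    ∫ ω, opTrace (exp (S + Y ω)) ∂P ≤ Real.exp (r ^ 2 / 2) * opTrace (exp S) := by
  have hYm := hY.aestronglyMeasurable
  have hYint : Integrable Y P := integrable_comp_of_ae_norm_le continuous_id hYm hYr
  let L : (E →L[ℝ] E) →L[ℝ] ℝ := opTrace.comp (ContinuousLinearMap.mul ℝ (E →L[ℝ] E) (exp S))
  have hL0 : ∫ ω, L (Y ω) ∂P = 0 := by rw [L.integral_comp_comm hYint, hY0, map_zero]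
  have hexp : Integrable (fun ω ↦ opTrace (exp (S + Y ω))) P :=
    integrable_comp_of_ae_norm_le (continuous_opTrace_exp.comp (continuous_const_add S)) hYm hYr
  have hpos : 0 < 1 - r ^ 2 / 6 := by linarith
  refine le_of_mul_le_mul_left ?_ hpos
  calc (1 - r ^ 2 / 6) * ∫ ω, opTrace (exp (S + Y ω)) ∂P
      = ∫ ω, (1 - r ^ 2 / 6) * opTrace (exp (S + Y ω)) ∂P := (integral_const_mul _ _).symm
    _ ≤ ∫ ω, ((1 + r ^ 2 / 3) * opTrace (exp S) + L (Y ω)) ∂P := by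
        refine integral_mono_ae (hexp.const_mul _)
          ((integrable_const _).add (L.integrable_comp hYint)) ?_
        filter_upwards [hYsa, hYr] with ω hsa hle using opTrace_exp_add_le hS hsa hle
    _ = (1 + r ^ 2 / 3) * opTrace (exp S) := by
        rw [integral_add (integrable_const _) (L.integrable_comp hYint), hL0]
        simp
    _ ≤ (1 - r ^ 2 / 6) * Real.exp (r ^ 2 / 2) * opTrace (exp S) :=
        mul_le_mul_of_nonneg_right (one_add_div_three_le_mul_exp (sq_nonneg r) hr)
          (opTrace_exp_nonneg hS)
    _ = (1 - r ^ 2 / 6) * (Real.exp (r ^ 2 / 2) * opTrace (exp S)) := mul_assoc ..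

lemma integral_opTrace_exp_add_le_of_indepFun {Z Y : Ω → E →L[ℝ] E} {R r : ℝ}
    (hZY : Z ⟂ᵢ[P] Y) (hZ : AEMeasurable Z P) (hY : AEMeasurable Y P)
    (hZsa : ∀ᵐ ω ∂P, IsSelfAdjoint (Z ω)) (hYsa : ∀ᵐ ω ∂P, IsSelfAdjoint (Y ω))
    (hZR : ∀ᵐ ω ∂P, ‖Z ω‖ ≤ R) (hYr : ∀ᵐ ω ∂P, ‖Y ω‖ ≤ r) (hY0 : ∫ ω, Y ω ∂P = 0)
    (hr : r ^ 2 ≤ 2) :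
    ∫ ω, opTrace (exp (Z ω + Y ω)) ∂P ≤
      Real.exp (r ^ 2 / 2) * ∫ ω, opTrace (exp (Z ω)) ∂P := by
  have hcont : Continuous fun q : (E →L[ℝ] E) × (E →L[ℝ] E) ↦ opTrace (exp (q.1 + q.2)) :=
    continuous_opTrace_exp.comp continuous_add
  have hInt : Integrable (fun ω ↦ opTrace (exp (Z ω + Y ω))) P :=
    integrable_comp_of_ae_norm_le continuous_opTrace_exp (hZ.add hY).aestronglyMeasurable
      (R := R + r) (by filter_upwards [hZR, hYr] with ω h₁ h₂ using norm_add_le_of_le h₁ h₂)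
  rw [integral_prodMk_of_indepFun hZY hZ hY hcont.stronglyMeasurable hInt, ← integral_const_mul]
  refine integral_mono_of_nonneg ?_ ((integrable_comp_of_ae_norm_le continuous_opTrace_exp
    hZ.aestronglyMeasurable hZR).const_mul _) ?_
  · filter_upwards [hZsa] with ω hω
    exact integral_nonneg_of_ae (hYsa.mono fun ω' hω' ↦ opTrace_exp_nonneg (hω.add hω'))
  · filter_upwards [hZsa] with ω hω using integral_opTrace_exp_add_le hω hY hYsa hYr hY0 hr

variable {X : κ → Ω → E →L[ℝ] E} {r R : ℝ}

lemma integral_opTrace_exp_sum_le_of_iIndepFun (hind : iIndepFun X P)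
    (hX : ∀ k, AEMeasurable (X k) P) (hsa : ∀ k, ∀ᵐ ω ∂P, IsSelfAdjoint (X k ω))
    (hr : ∀ k, ∀ᵐ ω ∂P, ‖X k ω‖ ≤ r) (h0 : ∀ k, ∫ ω, X k ω ∂P = 0) (hr2 : r ^ 2 ≤ 2)
    (s : Finset κ) :
    ∫ ω, opTrace (exp (∑ k ∈ s, X k ω)) ∂P ≤ Real.exp (s.card * (r ^ 2 / 2)) * finrank ℝ E := by
  classical
  induction s using Finset.induction with
  | empty => simp [opTrace]
  | insert k s hk ih =>
    have hindep : (fun ω ↦ ∑ j ∈ s, X j ω) ⟂ᵢ[P] X k := by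
      simpa only [Finset.sum_fn] using hind.indepFun_finsetSum_of_notMem₀ hX hk
    simp only [Finset.sum_insert hk, Finset.card_insert_of_notMem hk, add_comm (X k _)]
    calc ∫ ω, opTrace (exp (∑ j ∈ s, X j ω + X k ω)) ∂P
        ≤ Real.exp (r ^ 2 / 2) * ∫ ω, opTrace (exp (∑ j ∈ s, X j ω)) ∂P :=
          integral_opTrace_exp_add_le_of_indepFun hindep
            (Finset.aemeasurable_fun_sum s fun j _ ↦ hX j) (hX k)
            (ae_isSelfAdjoint_sum hsa s) (hsa k) (ae_norm_sum_le hr s) (hr k) (h0 k) hr2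
      _ ≤ Real.exp (r ^ 2 / 2) * (Real.exp (s.card * (r ^ 2 / 2)) * finrank ℝ E) := by gcongr
      _ = Real.exp ((s.card + 1 : ℕ) * (r ^ 2 / 2)) * finrank ℝ E := by
          rw [← mul_assoc, ← Real.exp_add]
          push_cast
          ring_nf

lemma integral_opTrace_exp_smul_sum_le_of_iIndepFun (hind : iIndepFun X P)
    (hX : ∀ k, AEMeasurable (X k) P) (hsa : ∀ k, ∀ᵐ ω ∂P, IsSelfAdjoint (X k ω))
    (hR : ∀ k, ∀ᵐ ω ∂P, ‖X k ω‖ ≤ R) (h0 : ∀ k, ∫ ω, X k ω ∂P = 0) {θ : ℝ}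
    (hθ : (θ * R) ^ 2 ≤ 2) (s : Finset κ) :
    ∫ ω, opTrace (exp (θ • ∑ k ∈ s, X k ω)) ∂P ≤
      Real.exp (s.card * ((θ * R) ^ 2 / 2)) * finrank ℝ E := by
  have hsq : (|θ| * R) ^ 2 = (θ * R) ^ 2 := by rw [mul_pow, sq_abs, mul_pow]
  simp only [Finset.smul_sum, ← hsq]
  refine integral_opTrace_exp_sum_le_of_iIndepFun (X := fun k ω ↦ θ • X k ω)
    (hind.comp (fun _ ↦ (θ • ·)) fun _ ↦ measurable_const_smul θ)
    (fun k ↦ (hX k).const_smul θ) (fun k ↦ ?_) (fun k ↦ ?_) (fun k ↦ ?_) (hsq ▸ hθ) s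
  · filter_upwards [hsa k] with ω hω using (IsSelfAdjoint.all θ).smul hω
  · filter_upwards [hR k] with ω hω
    rw [norm_smul, Real.norm_eq_abs]
    gcongr
  · rw [integral_smul, h0, smul_zero]

lemma exp_mul_measureReal_lt_norm_sum_le_of_iIndepFun (hind : iIndepFun X P)
    (hX : ∀ k, AEMeasurable (X k) P) (hsa : ∀ k, ∀ᵐ ω ∂P, IsSelfAdjoint (X k ω))
    (hR : ∀ k, ∀ᵐ ω ∂P, ‖X k ω‖ ≤ R) (h0 : ∀ k, ∫ ω, X k ω ∂P = 0) {θ u : ℝ}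
    (hθ : 0 < θ) (hθR : (θ * R) ^ 2 ≤ 2) (hu : 0 ≤ u) (s : Finset κ) :
    Real.exp (θ * u) * P.real {ω | u < ‖∑ k ∈ s, X k ω‖} ≤
      2 * finrank ℝ E * Real.exp (s.card * ((θ * R) ^ 2 / 2)) := by
  have hpos := integral_opTrace_exp_smul_sum_le_of_iIndepFun hind hX hsa hR h0 hθR s
  have hneg := integral_opTrace_exp_smul_sum_le_of_iIndepFun hind hX hsa hR h0 (θ := -θ)
    (by rwa [neg_mul, neg_sq]) s
  rw [neg_mul, neg_sq] at hneg
  linarith [measureReal_lt_norm_le_integral_opTrace (Finset.aemeasurable_fun_sum s fun k _ ↦ hX k)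
    (ae_isSelfAdjoint_sum hsa s) (ae_norm_sum_le hR s) hθ hu]

/-- The bound is phrased through `L` because the exponent `-u² / (2 #s R²)` would be a junk value
for `R = 0`. -/
theorem measureReal_lt_norm_sum_le_of_iIndepFun (hind : iIndepFun X P)
    (hX : ∀ k, AEMeasurable (X k) P) (hsa : ∀ k, ∀ᵐ ω ∂P, IsSelfAdjoint (X k ω))
    (hR : ∀ k, ∀ᵐ ω ∂P, ‖X k ω‖ ≤ R) (h0 : ∀ k, ∫ ω, X k ω ∂P = 0) {s : Finset κ}
    {u L : ℝ} (hu : 0 < u) (hL : 2 * (s.card * R ^ 2) * L ≤ u ^ 2) :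
    P.real {ω | u < ‖∑ k ∈ s, X k ω‖} ≤ 2 * finrank ℝ E * Real.exp (-L) := by
  rcases le_or_gt (s.card * R) u with hRu | huR
  · have hnull : P.real {ω | u < ‖∑ k ∈ s, X k ω‖} = 0 := by
      rw [measureReal_eq_zero_iff, measure_eq_zero_iff_ae_notMem]
      exact (ae_norm_sum_le hR s).mono fun ω hω ↦ not_lt.2 (hω.trans hRu)
    rw [hnull]
    positivity
  have hRpos : 0 < R := pos_of_mul_pos_right (hu.trans huR) s.card.cast_nonneg
  have hcard : (0 : ℝ) < s.card := pos_of_mul_pos_left (hu.trans huR) hRpos.le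
  -- `θ` minimises the exponent `#s (θ R)² / 2 - θ u`.
  set θ := u / (s.card * R ^ 2) with hθ
  have hθR : (θ * R) ^ 2 ≤ 2 := by
    have : θ * R = u / (s.card * R) := by rw [hθ]; field_simp
    have : (θ * R) ^ 2 ≤ 1 := by
      rw [this]
      exact pow_le_one₀ (by positivity) ((div_le_one (by positivity)).2 huR.le)
    linarith
  have hLθ : L + s.card * ((θ * R) ^ 2 / 2) ≤ θ * u := by
    have : s.card * ((θ * R) ^ 2 / 2) = θ * u / 2 := by rw [hθ]; field_simp
    have : L ≤ θ * u / 2 := by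
      rw [hθ, div_mul_eq_mul_div, div_div, le_div_iff₀ (by positivity)]
      linarith
    linarith
  refine le_of_mul_le_mul_left ?_ (Real.exp_pos (θ * u))
  calc Real.exp (θ * u) * P.real {ω | u < ‖∑ k ∈ s, X k ω‖}
      ≤ 2 * finrank ℝ E * Real.exp (s.card * ((θ * R) ^ 2 / 2)) :=
        exp_mul_measureReal_lt_norm_sum_le_of_iIndepFun hind hX hsa hR h0 (by positivity)
          hθR hu.le s
    _ ≤ 2 * finrank ℝ E * Real.exp (θ * u + -L) := by gcongr; linarith
    _ = Real.exp (θ * u) * (2 * finrank ℝ E * Real.exp (-L)) := by rw [Real.exp_add]; ring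

end Hoeffding

section Sampling

variable {ι κ : Type*} [Fintype ι] [Fintype κ]

lemma norm_inv_card_smul_sum_le [Nonempty ι] {F : Type*} [SeminormedAddCommGroup F]
    [NormedSpace ℝ F] {f : ι → F} {K : ℝ} (hf : ∀ i, ‖f i‖ ≤ K) :
    ‖(Fintype.card ι : ℝ)⁻¹ • ∑ i, f i‖ ≤ K := by
  have hcard : (0 : ℝ) < Fintype.card ι := by exact_mod_cast Fintype.card_pos
  rw [norm_smul, norm_inv, Real.norm_natCast, inv_mul_le_iff₀ hcard]
  simpa using norm_sum_le_of_le Finset.univ fun i _ ↦ hf i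

lemma inv_card_smul_sum_sub [Nonempty κ] {F : Type*} [AddCommGroup F] [Module ℝ F]
    (f : κ → F) (x : F) :
    (Fintype.card κ : ℝ)⁻¹ • ∑ k, (f k - x) = (Fintype.card κ : ℝ)⁻¹ • ∑ k, f k - x := by
  rw [Finset.sum_sub_distrib, smul_sub, Finset.sum_const, Finset.card_univ,
    ← Nat.cast_smul_eq_nsmul ℝ, inv_smul_smul₀ (Nat.cast_ne_zero.2 Fintype.card_ne_zero)]

variable [Nonempty ι] [MeasurableSpace ι] [MeasurableSingletonClass ι] [DecidableEq κ]

lemma toMeasure_uniformOfFintype_pi :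
    (PMF.uniformOfFintype (κ → ι)).toMeasure =
      Measure.pi fun _ : κ ↦ (PMF.uniformOfFintype ι).toMeasure := by
  refine Measure.ext_of_singleton fun ω ↦ ?_
  rw [Measure.pi_singleton]
  simp [PMF.toMeasure_apply_singleton _ _ (measurableSet_singleton _), ENNReal.inv_pow]

lemma iIndepFun_comp_eval_uniformOfFintype {β : Type*} [MeasurableSpace β] (f : ι → β) :
    iIndepFun (fun (k : κ) ω ↦ f (ω k)) (PMF.uniformOfFintype (κ → ι)).toMeasure := by
  rw [toMeasure_uniformOfFintype_pi]
  exact iIndepFun_pi (X := fun _ ↦ f) fun _ ↦ (measurable_of_finite f).aemeasurable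

lemma integral_comp_eval_uniformOfFintype {F : Type*} [NormedAddCommGroup F] [NormedSpace ℝ F]
    [CompleteSpace F] (f : ι → F) (k : κ) :
    ∫ ω, f (ω k) ∂(PMF.uniformOfFintype (κ → ι)).toMeasure =
      (Fintype.card ι : ℝ)⁻¹ • ∑ i, f i := by
  have heval := measurePreserving_eval (fun _ : κ ↦ (PMF.uniformOfFintype ι).toMeasure) k
  rw [toMeasure_uniformOfFintype_pi, ← integral_map (f := f) heval.measurable.aemeasurable
    (StronglyMeasurable.of_discrete).aestronglyMeasurable, heval.map_eq, PMF.integral_eq_sum]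
  simp [Finset.smul_sum]

lemma uniformOfFintype_measureReal_lt_norm_sum_le {Y : ι → E →L[ℝ] E} {R u L : ℝ}
    (hsa : ∀ i, IsSelfAdjoint (Y i)) (hR : ∀ i, ‖Y i‖ ≤ R) (h0 : ∑ i, Y i = 0) (hu : 0 < u)
    (hL : 2 * (Fintype.card κ * R ^ 2) * L ≤ u ^ 2) :
    (PMF.uniformOfFintype (κ → ι)).toMeasure.real {ω | u < ‖∑ k, Y (ω k)‖} ≤
      2 * finrank ℝ E * Real.exp (-L) := by
  set P := (PMF.uniformOfFintype (κ → ι)).toMeasure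
  have hmeas (k : κ) : AEMeasurable (fun ω : κ → ι ↦ Y (ω k)) P :=
    ((measurable_of_finite Y).comp (measurable_pi_apply k)).aemeasurable
  have hYsa (k : κ) : ∀ᵐ ω ∂P, IsSelfAdjoint (Y (ω k)) := .of_forall fun ω ↦ hsa (ω k)
  have hYR (k : κ) : ∀ᵐ ω ∂P, ‖Y (ω k)‖ ≤ R := .of_forall fun ω ↦ hR (ω k)
  have hmean (k : κ) : ∫ ω, Y (ω k) ∂P = 0 := by
    rw [integral_comp_eval_uniformOfFintype, h0, smul_zero]
  exact measureReal_lt_norm_sum_le_of_iIndepFun (iIndepFun_comp_eval_uniformOfFintype Y) hmeas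
    hYsa hYR hmean hu (s := Finset.univ) hL

theorem uniformOfFintype_measureReal_lt_norm_average_sub_average_le [Nonempty κ]
    {T : ι → E →L[ℝ] E} {K t L : ℝ} (hsa : ∀ i, IsSelfAdjoint (T i)) (hK : ∀ i, ‖T i‖ ≤ K)
    (ht : 0 < t) (hL : 8 * K ^ 2 * L ≤ Fintype.card κ * t ^ 2) :
    (PMF.uniformOfFintype (κ → ι)).toMeasure.real
      {ω | t < ‖(Fintype.card κ : ℝ)⁻¹ • ∑ k, T (ω k) - (Fintype.card ι : ℝ)⁻¹ • ∑ i, T i‖} ≤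
      2 * finrank ℝ E * Real.exp (-L) := by
  have hcard : (0 : ℝ) < Fintype.card κ := by exact_mod_cast Fintype.card_pos
  set M := (Fintype.card ι : ℝ)⁻¹ • ∑ i, T i with hM
  have hMsa : IsSelfAdjoint M :=
    (IsSelfAdjoint.all (Fintype.card ι : ℝ)⁻¹).smul (isSelfAdjoint_sum _ fun i _ ↦ hsa i)
  have hYsa (i : ι) : IsSelfAdjoint (T i - M) := (hsa i).sub hMsa
  have hYK (i : ι) : ‖T i - M‖ ≤ K + K := norm_sub_le_of_le (hK i) (norm_inv_card_smul_sum_le hK)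
  have hY0 : ∑ i, (T i - M) = 0 := by
    rw [Finset.sum_sub_distrib, Finset.sum_const, Finset.card_univ, ← Nat.cast_smul_eq_nsmul ℝ,
      hM, smul_inv_smul₀ (Nat.cast_ne_zero.2 Fintype.card_ne_zero), sub_self]
  have hset : {ω : κ → ι | t < ‖(Fintype.card κ : ℝ)⁻¹ • ∑ k, T (ω k) - M‖} =
      {ω | Fintype.card κ * t < ‖∑ k, (T (ω k) - M)‖} := by
    ext ω
    rw [Set.mem_ofPred_eq, Set.mem_ofPred_eq, ← inv_card_smul_sum_sub, norm_smul, norm_inv,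
      Real.norm_natCast, lt_inv_mul_iff₀ hcard]
  have hLs : 2 * (Fintype.card κ * (K + K) ^ 2) * L ≤ (Fintype.card κ * t) ^ 2 := by
    calc 2 * (Fintype.card κ * (K + K) ^ 2) * L = Fintype.card κ * (8 * K ^ 2 * L) := by ring
      _ ≤ Fintype.card κ * (Fintype.card κ * t ^ 2) := by gcongr
      _ = (Fintype.card κ * t) ^ 2 := by ring
  rw [hset]
  exact uniformOfFintype_measureReal_lt_norm_sum_le (Y := fun i ↦ T i - M) hYsa hYK hY0
    (by positivity) hLs

end Sampling

end Operators

lemma isSelfAdjoint_toEuclideanCLM {m : Type*} [Fintype m] [DecidableEq m] {M : Matrix m m ℝ}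
    (hM : M.IsHermitian) : IsSelfAdjoint (Matrix.toEuclideanCLM (𝕜 := ℝ) M) :=
  IsSelfAdjoint.map hM Matrix.toEuclideanCLM

theorem subsampled_hessian_concentration_general {ι : Type*} [Fintype ι] [Nonempty ι]
    [MeasurableSpace ι] [MeasurableSingletonClass ι] {p : ℕ}
    {A : ι → Matrix (Fin p) (Fin p) ℝ} {K t δ : ℝ} (hA : ∀ i, (A i).IsHermitian)
    (hK : ∀ i, specNorm (A i) ≤ K) (ht : 0 < t) (hδ : 0 < δ) {s : ℕ} (hs : 0 < s)
    (hsize : 8 * K ^ 2 * Real.log (2 * p / δ) / t ^ 2 ≤ s) :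
    ENNReal.ofReal (1 - δ) ≤
      (PMF.uniformOfFintype (Fin s → ι)).toMeasure
        {ω | specNorm ((s : ℝ)⁻¹ • ∑ k, A (ω k) - (Fintype.card ι : ℝ)⁻¹ • ∑ i, A i) ≤ t} := by
  have : Nonempty (Fin s) := Fin.pos_iff_nonempty.1 hs
  set P := (PMF.uniformOfFintype (Fin s → ι)).toMeasure
  set D : (Fin s → ι) → Matrix (Fin p) (Fin p) ℝ :=
    fun ω ↦ (s : ℝ)⁻¹ • ∑ k, A (ω k) - (Fintype.card ι : ℝ)⁻¹ • ∑ i, A i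
  have htail : P.real {ω | t < specNorm (D ω)} ≤ δ := by
    calc P.real {ω | t < specNorm (D ω)} ≤ 2 * p * Real.exp (-Real.log (2 * p / δ)) := by
          have := uniformOfFintype_measureReal_lt_norm_average_sub_average_le (κ := Fin s)
            (fun i ↦ isSelfAdjoint_toEuclideanCLM (hA i)) hK ht
            (L := Real.log (2 * p / δ)) (by simpa [div_le_iff₀ (pow_pos ht 2)] using hsize)
          simpa [D, specNorm] using this
      _ ≤ δ := by
          rw [Real.exp_neg, ← div_eq_mul_inv, div_le_iff₀ (Real.exp_pos _), ← div_le_iff₀' hδ]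
          exact Real.le_exp_log _
  have hmeas : MeasurableSet {ω | t < specNorm (D ω)} := (Set.toFinite _).measurableSet
  have hcompl : {ω | specNorm (D ω) ≤ t} = {ω | t < specNorm (D ω)}ᶜ := by
    ext ω
    simp
  rw [hcompl, ← ofReal_measureReal, probReal_compl_eq_one_sub hmeas]
  gcongr

/-- matrix Bernstein concentration of the sub-sampled Hessian:
if `A₁, …, Aₙ` are symmetric PSD `p×p` matrices with `‖Aᵢ‖ ≤ K`, `Ā` is their average,
and `s ≥ 16 K² log(2p/δ)/(c²ε²)` indices are drawn i.i.d. uniformly from `{1,…,n}`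
(equivalently, a uniformly random tuple `ω : Fin s → Fin n`), then with probability at
least `1 - δ` the sampled average `H = (1/s) Σ_k A_{ω k}` satisfies `‖H - Ā‖ ≤ ε c`. -/
theorem subsampled_hessian_concentration {p n : ℕ} (hp : 0 < p) (hn : 0 < n)
    (A : Fin n → Matrix (Fin p) (Fin p) ℝ)
    (K c ε δ : ℝ)
    (hpsd : ∀ i, (A i).PosSemidef)
    (hbnd : ∀ i, specNorm (A i) ≤ K)
    (hc : 0 < c) (hε0 : 0 < ε) (hε1 : ε < 1) (hδ0 : 0 < δ) (hδ1 : δ < 1)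
    (s : ℕ) (hs : 0 < s)
    (hsize : 16 * K ^ 2 * Real.log (2 * p / δ) / (c ^ 2 * ε ^ 2) ≤ (s : ℝ)) :
    haveI : Nonempty (Fin n) := Fin.pos_iff_nonempty.mp hn
    ENNReal.ofReal (1 - δ) ≤
      (PMF.uniformOfFintype (Fin s → Fin n)).toMeasure
        {ω | specNorm ((s : ℝ)⁻¹ • ∑ k : Fin s, A (ω k) -
              (n : ℝ)⁻¹ • ∑ i : Fin n, A i) ≤ ε * c} := by
  have : Nonempty (Fin n) := Fin.pos_iff_nonempty.mp hn
  have hlog : 0 ≤ Real.log (2 * p / δ) := by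
    have hp1 : (1 : ℝ) ≤ p := by exact_mod_cast hp
    exact Real.log_nonneg ((one_le_div hδ0).2 (by linarith))
  have hsize' : 8 * K ^ 2 * Real.log (2 * p / δ) / (ε * c) ^ 2 ≤ s := by
    refine le_trans ?_ hsize
    rw [mul_pow, mul_comm (ε ^ 2)]
    gcongr
    norm_num
  simpa only [Fintype.card_fin] using subsampled_hessian_concentration_general
    (fun i ↦ (hpsd i).isHermitian) hbnd (mul_pos hε0 hc) hδ0 hs hsize'
end
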